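/- Upper bound for the d-dimensional discrete kernel: Let h > 0, d ≥ 1, s ∈ (0,1). For every m ∈ ℤ^d \ {0}, writing ‖m‖₁ := Σ_{i=1}^d |m_i|, one has K_s^h(m) ≤ h^{−2s} · 2^{d(d+2s−1)} 4^s Γ(d/2 + s) Γ(‖m‖₁ − s) / ( π^{d/2} |Γ(−s)| Γ(‖m‖₁ + d + s) ). -/

import Mathlib

open scoped BigOperators
open MeasureTheory

/-- Modified Bessel function of the first kind of integer order `k`. -/
noncomputable def besselI (k : ℤ) (t : ℝ) : ℝ :=
  ∑' ℓ : ℕ, (t / 2) ^ (2 * ℓ + k.natAbs) /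
    ((Nat.factorial ℓ : ℝ) * Real.Gamma ((ℓ : ℝ) + (k.natAbs : ℝ) + 1))

/-- Semidiscrete heat kernel `G(m,t) = e^{-2dt} ∏ I_{m_i}(2t)` on `ℤ^d`. -/
noncomputable def heatG (d : ℕ) (m : Fin d → ℤ) (t : ℝ) : ℝ :=
  Real.exp (-(2 * (d : ℝ) * t)) * ∏ i, besselI (m i) (2 * t)

/-- The discrete kernel `K_s^h(m)`, with `K_s^h(0) = 0`. -/
noncomputable def Ksh (d : ℕ) (h s : ℝ) (m : Fin d → ℤ) : ℝ :=
  if m = 0 then 0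
  else h ^ (-(2 * s)) * |Real.Gamma (-s)|⁻¹ *
    ∫ t in Set.Ioi (0 : ℝ), heatG d m t / t ^ (1 + s)

/-- Membership in the space `ℓ_s`. -/
def memLs (d : ℕ) (s : ℝ) (u : (Fin d → ℤ) → ℝ) : Prop :=
  Summable fun m : Fin d → ℤ =>
    |u m| * (1 + Real.sqrt (∑ i, ((m i : ℝ)) ^ 2)) ^ (-((d : ℝ) + 2 * s))

/-- The fractional discrete Laplacian `(-Δ_d)^s u_j = ∑_{m} (u_j - u_m) K_s^h(j-m)`
(the `m = j` term vanishes since `K_s^h(0) = 0`). -/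
noncomputable def fracLap (d : ℕ) (h s : ℝ) (u : (Fin d → ℤ) → ℝ) (j : Fin d → ℤ) : ℝ :=
  ∑' m : Fin d → ℤ, (u j - u m) * Ksh d h s (j - m)


/-- Real beta integral: integrability and value. -/
lemma aux_beta {a b : ℝ} (ha : 0 < a) (hb : 0 < b) :
    IntegrableOn (fun x : ℝ => x ^ (a - 1) * (1 - x) ^ (b - 1)) (Set.Ioo 0 1) ∧
    ∫ x in Set.Ioo (0:ℝ) 1, x ^ (a - 1) * (1 - x) ^ (b - 1) =
      Real.Gamma a * Real.Gamma b / Real.Gamma (a + b) := by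
  have hB := ProbabilityTheory.beta_pos ha hb
  have h1 := ProbabilityTheory.lintegral_betaPDF_eq_one ha hb
  rw [ProbabilityTheory.lintegral_betaPDF] at h1
  have hm : AEStronglyMeasurable (fun x : ℝ => x ^ (a - 1) * (1 - x) ^ (b - 1))
      (volume.restrict (Set.Ioo 0 1)) := by
    apply Measurable.aestronglyMeasurable
    fun_prop
  have hnn : 0 ≤ᵐ[volume.restrict (Set.Ioo (0:ℝ) 1)]
      (fun x : ℝ => x ^ (a - 1) * (1 - x) ^ (b - 1)) := by
    filter_upwards [ae_restrict_mem measurableSet_Ioo] with x hx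
    have := hx.1
    have : 0 < 1 - x := by linarith [hx.2]
    positivity
  have h2 : ∫⁻ x in Set.Ioo (0:ℝ) 1, ENNReal.ofReal (x ^ (a - 1) * (1 - x) ^ (b - 1)) =
      ENNReal.ofReal (ProbabilityTheory.beta a b) := by
    have : ∀ x : ℝ, ENNReal.ofReal (1 / ProbabilityTheory.beta a b * x ^ (a - 1) * (1 - x) ^ (b - 1))
      = ENNReal.ofReal (1 / ProbabilityTheory.beta a b) *
        ENNReal.ofReal (x ^ (a - 1) * (1 - x) ^ (b - 1)) := by
      intro x
      rw [← ENNReal.ofReal_mul (by positivity), mul_assoc]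
    simp_rw [this] at h1
    rw [lintegral_const_mul _ (by fun_prop)] at h1
    have h3 : ENNReal.ofReal (ProbabilityTheory.beta a b) *
      ENNReal.ofReal (1 / ProbabilityTheory.beta a b) = 1 := by
      rw [← ENNReal.ofReal_mul hB.le, mul_one_div_cancel hB.ne', ENNReal.ofReal_one]
    calc _ = ENNReal.ofReal (ProbabilityTheory.beta a b) * (ENNReal.ofReal (1 / ProbabilityTheory.beta a b) * ∫⁻ x in Set.Ioo (0:ℝ) 1, ENNReal.ofReal (x ^ (a - 1) * (1 - x) ^ (b - 1))) := by
          rw [← mul_assoc, h3, one_mul]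
      _ = _ := by rw [h1, mul_one]
  constructor
  · refine ⟨hm, ?_⟩
    rw [hasFiniteIntegral_iff_ofReal hnn, h2]
    exact ENNReal.ofReal_lt_top
  · rw [integral_eq_lintegral_of_nonneg_ae hnn hm, h2, ENNReal.toReal_ofReal hB.le]
    rfl

lemma aux_gamma_int {a r : ℝ} (ha : 0 < a) (hr : 0 < r) :
    IntegrableOn (fun t : ℝ => t ^ (a - 1) * Real.exp (-(r * t))) (Set.Ioi 0) := by
  have := integrableOn_rpow_mul_exp_neg_mul_rpow (p := 1) (s := a - 1) (b := r) (by linarith) one_pos hr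
  refine this.congr_fun ?_ measurableSet_Ioi
  intro x hx
  simp

/-- Partial sums of the binomial series. -/
lemma aux_binom {α u : ℝ} (hα : 0 < α) (hu : 0 ≤ u) (hu1 : u < 1) (N : ℕ) :
    ∑ n ∈ Finset.range N, Real.Gamma (n + α) / (n.factorial : ℝ) * u ^ n ≤
      Real.Gamma α * (1 - u) ^ (-α) := by
  have hg : ∀ n : ℕ, Real.Gamma (n + α) = ∫ t in Set.Ioi (0:ℝ), t ^ (n + α - 1) * Real.exp (-(1 * t)) := by
    intro n
    rw [Real.integral_rpow_mul_exp_neg_mul_Ioi (by positivity) one_pos]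
    simp
  have hR : Real.Gamma α * (1 - u) ^ (-α) =
      ∫ t in Set.Ioi (0:ℝ), t ^ (α - 1) * Real.exp (-((1 - u) * t)) := by
    rw [Real.integral_rpow_mul_exp_neg_mul_Ioi hα (by linarith), mul_comm,
      Real.rpow_neg (by linarith), one_div, Real.inv_rpow (by linarith)]
  rw [hR]
  have hL : ∑ n ∈ Finset.range N, Real.Gamma (n + α) / (n.factorial : ℝ) * u ^ n =
      ∫ t in Set.Ioi (0:ℝ), ∑ n ∈ Finset.range N,
        (u ^ n / (n.factorial : ℝ)) * (t ^ (n + α - 1) * Real.exp (-(1 * t))) := by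
    rw [integral_finsetSum]
    · refine Finset.sum_congr rfl fun n _ => ?_
      rw [integral_const_mul, ← hg]; ring
    · intro n _
      exact (aux_gamma_int (by positivity) one_pos).const_mul _
  rw [hL]
  refine setIntegral_mono_on ?_ (aux_gamma_int hα (by linarith)) measurableSet_Ioi ?_
  · apply integrable_finsetSum
    intro n _
    exact (aux_gamma_int (by positivity) one_pos).const_mul _
  · intro t ht
    have ht : 0 < t := ht
    have h1 := Real.sum_le_exp_of_nonneg (mul_nonneg hu ht.le) N
    have h2 : Real.exp (-((1 - u) * t)) = Real.exp (u * t) * Real.exp (-t) := by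
      rw [← Real.exp_add]; ring_nf
    calc _ = t ^ (α - 1) * ((∑ n ∈ Finset.range N, (u * t) ^ n / (n.factorial : ℝ)) * Real.exp (-t)) := by
          rw [Finset.sum_mul, Finset.mul_sum]
          refine Finset.sum_congr rfl fun n _ => ?_
          rw [show (n:ℝ) + α - 1 = n + (α - 1) by ring, Real.rpow_add ht, Real.rpow_natCast, mul_pow,
            one_mul]
          ring
      _ ≤ _ := by
          rw [h2]; gcongr

/-- Partial sums in Gauss' theorem. -/
lemma aux_gauss {α β c : ℝ} (hα : 0 < α) (hβ : 0 < β) (hc : α + β < c) (N : ℕ) :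
    ∑ n ∈ Finset.range N, Real.Gamma (n + α) * Real.Gamma (n + β) /
      ((n.factorial : ℝ) * Real.Gamma (n + c)) ≤
      Real.Gamma α * Real.Gamma β * Real.Gamma (c - α - β) /
        (Real.Gamma (c - α) * Real.Gamma (c - β)) := by
  have hcb : 0 < Real.Gamma (c - β) := Real.Gamma_pos_of_pos (by linarith)
  have hca : 0 < Real.Gamma (c - α) := Real.Gamma_pos_of_pos (by linarith)
  have hb : ∀ n : ℕ, Real.Gamma (n + β) / Real.Gamma (n + c) =
      (∫ x in Set.Ioo (0:ℝ) 1, x ^ (n + β - 1) * (1 - x) ^ (c - β - 1)) / Real.Gamma (c - β) := by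
    intro n
    rw [(aux_beta (a := n + β) (b := c - β) (by positivity) (by linarith)).2,
      show (n:ℝ) + β + (c - β) = n + c by ring]
    field_simp
  have hintg : ∀ n : ℕ, IntegrableOn
      (fun x : ℝ => x ^ (n + β - 1) * (1 - x) ^ (c - β - 1)) (Set.Ioo 0 1) := fun n =>
    (aux_beta (a := n + β) (b := c - β) (by positivity) (by linarith)).1
  obtain ⟨hi, hv⟩ := aux_beta (a := β) (b := c - α - β) hβ (by linarith)
  have hL : ∑ n ∈ Finset.range N, Real.Gamma (n + α) * Real.Gamma (n + β) /
      ((n.factorial : ℝ) * Real.Gamma (n + c)) =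
      (∫ x in Set.Ioo (0:ℝ) 1, ∑ n ∈ Finset.range N, Real.Gamma (n + α) / (n.factorial : ℝ) *
        (x ^ (n + β - 1) * (1 - x) ^ (c - β - 1))) / Real.Gamma (c - β) := by
    rw [integral_finsetSum, Finset.sum_div]
    · refine Finset.sum_congr rfl fun n _ => ?_
      rw [integral_const_mul, mul_div_assoc (Real.Gamma (n + α) / (n.factorial : ℝ)), ← hb,
        div_mul_div_comm]
    · intro n _
      exact (hintg n).const_mul _
  rw [hL]
  have hR : Real.Gamma α * Real.Gamma β * Real.Gamma (c - α - β) /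
        (Real.Gamma (c - α) * Real.Gamma (c - β)) =
      (∫ x in Set.Ioo (0:ℝ) 1, Real.Gamma α * (x ^ (β - 1) * (1 - x) ^ (c - α - β - 1))) /
        Real.Gamma (c - β) := by
    rw [integral_const_mul, hv, show β + (c - α - β) = c - α by ring]
    field_simp
  rw [hR]
  refine div_le_div_of_nonneg_right ?_ hcb.le
  refine setIntegral_mono_on ?_ (hi.const_mul _) measurableSet_Ioo ?_
  · apply integrable_finsetSum
    intro n _
    exact (hintg n).const_mul _
  · intro x hx
    have hx0 : 0 < x := hx.1
    have hx1 : 0 < 1 - x := by linarith [hx.2]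
    have h1 := aux_binom hα hx0.le hx.2 N
    calc _ = (∑ n ∈ Finset.range N, Real.Gamma (n + α) / (n.factorial : ℝ) * x ^ n) *
          (x ^ (β - 1) * (1 - x) ^ (c - β - 1)) := by
          rw [Finset.sum_mul]
          refine Finset.sum_congr rfl fun n _ => ?_
          rw [show (n:ℝ) + β - 1 = n + (β - 1) by ring, Real.rpow_add hx0, Real.rpow_natCast]
          ring
      _ ≤ (Real.Gamma α * (1 - x) ^ (-α)) * (x ^ (β - 1) * (1 - x) ^ (c - β - 1)) := by gcongr
      _ = _ := by
          rw [show c - α - β - 1 = -α + (c - β - 1) by ring, Real.rpow_add hx1]; ring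

/-- The sum after duplication. -/
lemma aux_sum {M a s δ : ℝ} (ha : a = M - s) (hM : 0 < M - s) (hs : 0 < s) (hδ : 0 < δ) (N : ℕ) :
    ∑ n ∈ Finset.range N, Real.Gamma (2 * n + a) * (2:ℝ) ^ (-(2 * n + a)) /
      ((n.factorial : ℝ) * Real.Gamma (n + (M + (δ + 1) / 2))) ≤
      (2:ℝ) ^ (2 * s + δ - 1) * Real.Gamma (δ / 2 + s) * Real.Gamma (M - s) /
        (Real.sqrt Real.pi * Real.Gamma (M + δ + s)) := by
  subst ha
  have key := aux_gauss (α := (M - s) / 2) (β := (M - s) / 2 + 1 / 2) (c := M + (δ + 1) / 2)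
    (by linarith) (by linarith) (by linarith) N
  have hpi : 0 < Real.sqrt Real.pi := Real.sqrt_pos.2 Real.pi_pos
  have hterm : ∀ n : ℕ, Real.Gamma (2 * n + (M - s)) * (2:ℝ) ^ (-(2 * n + (M - s))) =
      1 / (2 * Real.sqrt Real.pi) *
      (Real.Gamma (n + (M - s) / 2) * Real.Gamma (n + ((M - s) / 2 + 1 / 2))) := by
    intro n
    have := Real.Gamma_mul_Gamma_add_half (n + (M - s) / 2)
    rw [add_assoc] at this
    rw [this, show 2 * ((n:ℝ) + (M - s) / 2) = 2 * n + (M - s) by ring,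
      sub_eq_add_neg (1:ℝ), Real.rpow_add two_pos, Real.rpow_one]
    field_simp
  have hL : ∑ n ∈ Finset.range N, Real.Gamma (2 * n + (M - s)) * (2:ℝ) ^ (-(2 * n + (M - s))) /
      ((n.factorial : ℝ) * Real.Gamma (n + (M + (δ + 1) / 2))) = 1 / (2 * Real.sqrt Real.pi) *
      ∑ n ∈ Finset.range N, Real.Gamma (n + (M - s) / 2) * Real.Gamma (n + ((M - s) / 2 + 1 / 2)) /
      ((n.factorial : ℝ) * Real.Gamma (n + (M + (δ + 1) / 2))) := by
    rw [Finset.mul_sum]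
    refine Finset.sum_congr rfl fun n _ => ?_
    rw [hterm]; ring
  rw [hL]
  refine (mul_le_mul_of_nonneg_left key (by positivity)).trans (le_of_eq ?_)
  have d1 := Real.Gamma_mul_Gamma_add_half ((M - s) / 2)
  have d2 := Real.Gamma_mul_Gamma_add_half ((M + δ + s) / 2)
  rw [show M + (δ + 1) / 2 - (M - s) / 2 - ((M - s) / 2 + 1 / 2) = δ / 2 + s by ring,
    show M + (δ + 1) / 2 - (M - s) / 2 = (M + δ + s) / 2 + 1 / 2 by ring,
    show M + (δ + 1) / 2 - ((M - s) / 2 + 1 / 2) = (M + δ + s) / 2 by ring,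
    d1, mul_comm (Real.Gamma ((M + δ + s) / 2 + 1 / 2)), d2,
    show 2 * ((M - s) / 2) = M - s by ring, show 2 * ((M + δ + s) / 2) = M + δ + s by ring,
    show 1 - (M - s) = (2 * s + δ - 1) + (1 - (M + δ + s)) + 1 by ring, Real.rpow_add two_pos,
    Real.rpow_add two_pos, Real.rpow_one]
  have : 0 < Real.Gamma (M + δ + s) := Real.Gamma_pos_of_pos (by linarith)
  field_simp

lemma aux_prod (d : ℕ) {y : ℝ} (hy : 0 ≤ y) :
    ∏ i ∈ Finset.range d, (y + i) ≤ (y + ((d:ℝ) - 1) / 2) ^ d := by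
  rcases Nat.eq_zero_or_pos d with h0 | h0
  · subst h0; simp
  have hd : (1:ℝ) ≤ d := by exact_mod_cast h0
  have h1 : (∏ i ∈ Finset.range d, (y + i)) ^ 2 ≤ ((y + ((d:ℝ) - 1) / 2) ^ d) ^ 2 := by
    rw [sq, ← Finset.prod_range_reflect (fun i : ℕ => y + (i:ℝ)) d]
    nth_rewrite 2 [Finset.prod_range_reflect (fun i : ℕ => y + (i:ℝ)) d]
    rw [← Finset.prod_mul_distrib, ← pow_mul, mul_comm d 2, pow_mul]
    calc _ ≤ ∏ i ∈ Finset.range d, (y + ((d:ℝ) - 1) / 2) ^ 2 := by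
          apply Finset.prod_le_prod
          · intro i _; positivity
          · intro i hi
            have hi := Finset.mem_range.1 hi
            rw [show d - 1 - i = d - (1 + i) by omega, Nat.cast_sub (by omega)]
            push_cast
            nlinarith [sq_nonneg ((d:ℝ) - 1 - 2 * i)]
      _ = _ := by simp
  have : 0 ≤ y + ((d:ℝ) - 1) / 2 := by linarith
  exact le_of_sq_le_sq h1 (by positivity)

lemma aux_shift (d : ℕ) {y : ℝ} (hy : 0 < y) :
    Real.Gamma (y + d) = (∏ i ∈ Finset.range d, (y + i)) * Real.Gamma y := by
  induction d with
  | zero => simp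
  | succ n ih =>
    rw [Finset.prod_range_succ, Nat.cast_succ, ← add_assoc, Real.Gamma_add_one (by positivity), ih]
    ring

lemma aux_three_half : Real.Gamma (3 / 2) = Real.sqrt Real.pi / 2 := by
  rw [show (3:ℝ) / 2 = 1 / 2 + 1 by norm_num, Real.Gamma_add_one (by norm_num),
    Real.Gamma_one_half_eq]
  ring

lemma aux_gamma_lower {x : ℝ} (h0 : 0 ≤ x) (h1 : x ≤ 1) : Real.pi / 4 ≤ Real.Gamma (x + 1) := by
  have hc := (And.right Real.convexOn_log_Gamma) (x := x + 1) (show x + 1 ∈ Set.Ioi (0:ℝ) by simp; linarith)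
    (y := 2 - x) (show 2 - x ∈ Set.Ioi (0:ℝ) by simp; linarith) (a := 1 / 2) (b := 1 / 2)
    (by norm_num) (by norm_num) (by norm_num)
  have hc2 := (And.right Real.convexOn_Gamma) (x := 1) (show (1:ℝ) ∈ Set.Ioi (0:ℝ) by simp)
    (y := 2) (show (2:ℝ) ∈ Set.Ioi (0:ℝ) by simp) (a := x) (b := 1 - x)
    h0 (by linarith) (by ring)
  simp only [smul_eq_mul, Function.comp, Real.Gamma_one, Real.Gamma_two] at hc hc2
  rw [show x * 1 + (1 - x) * 2 = 2 - x by ring] at hc2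
  rw [show 1 / 2 * (x + 1) + 1 / 2 * (2 - x) = 3 / 2 by ring, aux_three_half] at hc
  have p1 : 0 < Real.Gamma (x + 1) := Real.Gamma_pos_of_pos (by linarith)
  have p2 : 0 < Real.Gamma (2 - x) := Real.Gamma_pos_of_pos (by linarith)
  have hpi : 0 < Real.sqrt Real.pi := Real.sqrt_pos.2 Real.pi_pos
  have h3 : Real.log ((Real.sqrt Real.pi / 2) ^ 2) ≤ Real.log (Real.Gamma (x + 1) * Real.Gamma (2 - x)) := by
    rw [Real.log_pow, Real.log_mul p1.ne' p2.ne']; push_cast; linarith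
  rw [Real.log_le_log_iff (by positivity) (by positivity), div_pow, Real.sq_sqrt Real.pi_pos.le] at h3
  nlinarith

lemma aux_base2 (e : ℕ) : (3 / 2 : ℝ) ^ (e + 2) * Real.Gamma (((e + 2 : ℕ) : ℝ) / 2 + 1) *
    (4 / Real.pi) ^ (e + 3) ≤ 2 ^ ((e + 2) ^ 2) / Real.sqrt Real.pi ^ (e + 2) := by
  have hpi3 := Real.pi_gt_three
  have hpi : 0 < Real.pi := Real.pi_pos
  have hsq : Real.sqrt Real.pi ^ 2 = Real.pi := Real.sq_sqrt hpi.le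
  have hs : 0 < Real.sqrt Real.pi := Real.sqrt_pos.2 hpi
  induction e using Nat.twoStepInduction with
  | zero =>
    norm_num
    rw [hsq, div_pow, show (9:ℝ) / 4 * (4 ^ 3 / Real.pi ^ 3) = 144 / Real.pi ^ 3 by ring,
      div_le_div_iff₀ (by positivity) hpi]
    nlinarith [mul_pos hpi (mul_pos hpi hpi), mul_pos hpi hpi]
  | one =>
    norm_num
    rw [show (5:ℝ) / 2 = 3 / 2 + 1 by norm_num, Real.Gamma_add_one (by norm_num), aux_three_half,
      le_div_iff₀ (by positivity), div_pow,
      show (27:ℝ) / 8 * (3 / 2 * (Real.sqrt Real.pi / 2)) * (4 ^ 4 / Real.pi ^ 4) * Real.sqrt Real.pi ^ 3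
        = 648 * (Real.sqrt Real.pi ^ 2) ^ 2 / Real.pi ^ 4 by ring, hsq, div_le_iff₀ (by positivity)]
    have : 2 ≤ Real.pi ^ 2 := by nlinarith
    nlinarith [sq_nonneg Real.pi, mul_self_nonneg (Real.pi^2)]
  | more n ih _ =>
    have hG : Real.Gamma (((n + 2 + 2 : ℕ) : ℝ) / 2 + 1) =
        (((n + 2 : ℕ) : ℝ) / 2 + 1) * Real.Gamma (((n + 2 : ℕ) : ℝ) / 2 + 1) := by
      rw [← Real.Gamma_add_one (by positivity)]; congr 1; push_cast; ring
    rw [hG]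
    have e1 : (3 / 2 : ℝ) ^ (n + 2 + 2) * ((((n + 2 : ℕ) : ℝ) / 2 + 1) * Real.Gamma (((n + 2 : ℕ) : ℝ) / 2 + 1)) * (4 / Real.pi) ^ (n + 2 + 3) = ((3 / 2 : ℝ) ^ (n + 2) * Real.Gamma (((n + 2 : ℕ) : ℝ) / 2 + 1) *
    (4 / Real.pi) ^ (n + 3)) * (36 * (((n + 2 : ℕ) : ℝ) / 2 + 1) / Real.pi ^ 2) := by
      rw [show n + 2 + 3 = (n + 3) + 2 by ring, pow_add (4 / Real.pi) (n + 3) 2,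
        pow_add (3 / 2 : ℝ) (n + 2) 2, div_pow 4 Real.pi 2]
      ring
    have e2 : (2:ℝ) ^ ((n + 2 + 2) ^ 2) / Real.sqrt Real.pi ^ (n + 2 + 2) =
        2 ^ ((n + 2) ^ 2) / Real.sqrt Real.pi ^ (n + 2) * (2 ^ (4 * n + 12) / Real.pi) := by
      rw [show (n + 2 + 2) ^ 2 = (n + 2) ^ 2 + (4 * n + 12) by ring, pow_add,
        pow_add (Real.sqrt Real.pi), hsq]
      field_simp
    rw [e1, e2]
    apply mul_le_mul ih _ (by positivity) (by positivity)
    rw [div_le_div_iff₀ (by positivity) hpi]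
    have hb : (n:ℝ) + 1 ≤ 2 ^ (4 * n + 12) / 4096 := by
      have : n + 1 ≤ 2 ^ (4 * n) := by
        calc n + 1 ≤ 2 ^ n := Nat.lt_two_pow_self
          _ ≤ _ := Nat.pow_le_pow_right (by norm_num) (by omega)
      rw [pow_add]
      have h' : (n:ℝ) + 1 ≤ 2 ^ (4 * n) := by exact_mod_cast this
      linarith
    push_cast
    have : 36 * (((n:ℝ) + 2) / 2 + 1) ≤ 2 ^ (4 * n + 12) * Real.pi := by
      have : (0:ℝ) ≤ n := by positivity
      nlinarith
    nlinarith

lemma aux_base (e r : ℕ) (hr : r ≤ e) :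
    Real.Gamma ((r:ℝ) + ((e:ℝ) / 2 + 1)) ≤ 2 ^ (e ^ 2) / Real.sqrt Real.pi ^ e *
      ((e:ℝ) + 1) ^ r * Real.Gamma ((r:ℝ) / ((e:ℝ) + 1) + 1) ^ (e + 1) := by
  have hpi3 := Real.pi_le_four
  have hpi : 0 < Real.pi := Real.pi_pos
  have hsq : Real.sqrt Real.pi ^ 2 = Real.pi := Real.sq_sqrt hpi.le
  have hs : 0 < Real.sqrt Real.pi := Real.sqrt_pos.2 hpi
  match e, hr with
  | 0, hr =>
    obtain rfl : r = 0 := by omega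
    simp
  | 1, hr =>
    interval_cases r
    · norm_num
      rw [aux_three_half, div_le_div_iff₀ two_pos hs]
      nlinarith
    · norm_num
      rw [show (5:ℝ) / 2 = 3 / 2 + 1 by norm_num,
        Real.Gamma_add_one (by norm_num), aux_three_half, div_pow, hsq]
      rw [show 2 / Real.sqrt Real.pi * 2 * (Real.pi / 2 ^ 2) = Real.pi / Real.sqrt Real.pi by ring,
        Real.div_sqrt]
      linarith
  | e + 2, hr =>
    have h1 : ∀ r : ℕ, r ≤ e + 2 → Real.Gamma ((r:ℝ) + (((e + 2 : ℕ):ℝ) / 2 + 1)) ≤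
        (3 / 2) ^ r * (((e + 2 : ℕ):ℝ) + 1) ^ r * Real.Gamma (((e + 2 : ℕ):ℝ) / 2 + 1) := by
      intro r
      induction r with
      | zero => simp
      | succ r ih =>
        intro hr
        have hr' : (r:ℝ) + 1 ≤ ((e + 2 : ℕ):ℝ) := by exact_mod_cast hr
        have := ih (by omega)
        rw [show ((r + 1 : ℕ) : ℝ) + (((e + 2 : ℕ):ℝ) / 2 + 1) = ((r:ℝ) + (((e + 2 : ℕ):ℝ) / 2 + 1)) + 1 by
          push_cast; ring, Real.Gamma_add_one (by positivity)]
        have hp : 0 < Real.Gamma ((r:ℝ) + (((e + 2 : ℕ):ℝ) / 2 + 1)) := Real.Gamma_pos_of_pos (by positivity)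
        calc _ ≤ (3 / 2 * (((e + 2 : ℕ):ℝ) + 1)) * ((3 / 2) ^ r * (((e + 2 : ℕ):ℝ) + 1) ^ r * Real.Gamma (((e + 2 : ℕ):ℝ) / 2 + 1)) := by
              apply mul_le_mul _ this hp.le (by positivity)
              linarith
          _ = _ := by ring
    have h2 := h1 r hr
    have h3 := aux_base2 e
    have hl : Real.pi / 4 ≤ Real.Gamma ((r:ℝ) / (((e + 2 : ℕ):ℝ) + 1) + 1) := by
      apply aux_gamma_lower (by positivity)
      rw [div_le_one (by positivity)]
      have : (r:ℝ) ≤ ((e + 2 : ℕ):ℝ) := by exact_mod_cast hr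
      linarith
    have hG : 0 < Real.Gamma (((e + 2 : ℕ):ℝ) / 2 + 1) := Real.Gamma_pos_of_pos (by positivity)
    have h4 : (3 / 2 : ℝ) ^ (e + 2) * Real.Gamma (((e + 2 : ℕ) : ℝ) / 2 + 1) ≤
        2 ^ ((e + 2) ^ 2) / Real.sqrt Real.pi ^ (e + 2) * (Real.pi / 4) ^ (e + 3) := by
      have := mul_le_mul_of_nonneg_right h3 (by positivity : 0 ≤ (Real.pi / 4) ^ (e + 3))
      rwa [mul_assoc, ← mul_pow, show 4 / Real.pi * (Real.pi / 4) = 1 by field_simp, one_pow, mul_one] at this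
    calc _ ≤ _ := h2
      _ ≤ (3 / 2) ^ (e + 2) * (((e + 2 : ℕ):ℝ) + 1) ^ r * Real.Gamma (((e + 2 : ℕ):ℝ) / 2 + 1) := by
          gcongr; norm_num
      _ = ((3 / 2 : ℝ) ^ (e + 2) * Real.Gamma (((e + 2 : ℕ) : ℝ) / 2 + 1)) * (((e + 2 : ℕ):ℝ) + 1) ^ r := by ring
      _ ≤ (2 ^ ((e + 2) ^ 2) / Real.sqrt Real.pi ^ (e + 2) * (Real.pi / 4) ^ (e + 3)) * (((e + 2 : ℕ):ℝ) + 1) ^ r := by gcongr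
      _ = 2 ^ ((e + 2) ^ 2) / Real.sqrt Real.pi ^ (e + 2) * (((e + 2 : ℕ):ℝ) + 1) ^ r * (Real.pi / 4) ^ (e + 3) := by ring
      _ ≤ _ := by gcongr

lemma aux_all (e N : ℕ) :
    Real.Gamma ((N:ℝ) + ((e:ℝ) / 2 + 1)) ≤ 2 ^ (e ^ 2) / Real.sqrt Real.pi ^ e *
      ((e:ℝ) + 1) ^ N * Real.Gamma ((N:ℝ) / ((e:ℝ) + 1) + 1) ^ (e + 1) := by
  induction N using Nat.strong_induction_on with
  | _ N ih =>
  by_cases hN : N ≤ e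
  · exact aux_base e N hN
  obtain ⟨x, rfl⟩ : ∃ x, N = x + (e + 1) := ⟨N - (e + 1), by omega⟩
  have h1 := ih x (by omega)
  have h2 := aux_shift (e + 1) (y := (x:ℝ) + ((e:ℝ) / 2 + 1)) (by positivity)
  have h3 := aux_prod (e + 1) (y := (x:ℝ) + ((e:ℝ) / 2 + 1)) (by positivity)
  rw [show ((x + (e + 1) : ℕ) : ℝ) + ((e:ℝ) / 2 + 1) = (x:ℝ) + ((e:ℝ) / 2 + 1) + ((e + 1 : ℕ) : ℝ) by
    push_cast; ring, h2]
  have h4 : ((x + (e + 1) : ℕ) : ℝ) / ((e:ℝ) + 1) + 1 = (x:ℝ) / ((e:ℝ) + 1) + 1 + 1 := by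
    push_cast; field_simp
  rw [h4, Real.Gamma_add_one (by positivity)]
  rw [show (x:ℝ) + ((e:ℝ) / 2 + 1) + (((e + 1 : ℕ) : ℝ) - 1) / 2 = ((x:ℝ) / ((e:ℝ) + 1) + 1) * ((e:ℝ) + 1) by
    push_cast; field_simp; ring] at h3
  have hp : 0 < Real.Gamma ((x:ℝ) + ((e:ℝ) / 2 + 1)) := Real.Gamma_pos_of_pos (by positivity)
  calc _ ≤ _ := mul_le_mul h3 h1 hp.le (by positivity)
    _ = _ := by rw [mul_pow, mul_pow, pow_add ((e:ℝ) + 1) x]; ring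

lemma aux_key (e : ℕ) (j : Fin (e + 1) → ℕ) :
    Real.Gamma (((∑ i, j i : ℕ):ℝ) + ((e:ℝ) / 2 + 1)) ≤ 2 ^ (e ^ 2) / Real.sqrt Real.pi ^ e *
      ((e:ℝ) + 1) ^ (∑ i, j i) * ∏ i, ((j i).factorial : ℝ) := by
  refine (aux_all e _).trans ?_
  gcongr
  have hc := Real.convexOn_log_Gamma.map_sum_le (t := Finset.univ) (w := fun _ : Fin (e + 1) => 1 / ((e:ℝ) + 1))
    (p := fun i => (j i : ℝ) + 1) (fun _ _ => by positivity) (by simp; field_simp)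
    (fun i _ => by simp; positivity)
  simp only [smul_eq_mul, Function.comp] at hc
  rw [← Finset.mul_sum, ← Finset.mul_sum] at hc
  have e1 : 1 / ((e:ℝ) + 1) * ∑ i, ((j i : ℝ) + 1) = ((∑ i, j i : ℕ):ℝ) / ((e:ℝ) + 1) + 1 := by
    rw [Finset.sum_add_distrib]; simp; field_simp
  rw [e1] at hc
  simp only [Real.Gamma_nat_eq_factorial] at hc
  have hG : 0 < Real.Gamma (((∑ i, j i : ℕ):ℝ) / ((e:ℝ) + 1) + 1) := Real.Gamma_pos_of_pos (by positivity)
  rw [← Real.log_le_log_iff (by positivity) (by positivity), Real.log_pow,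
    Real.log_prod (fun i _ => by positivity)]
  rw [one_div, inv_mul_eq_div, le_div_iff₀ (by positivity)] at hc
  push_cast at hc ⊢
  linarith

lemma aux_multi (e n : ℕ) :
    ∑ ℓ ∈ Finset.piAntidiag (Finset.univ : Finset (Fin (e + 1))) n,
      ∏ i, (1 / ((ℓ i).factorial : ℝ)) = ((e:ℝ) + 1) ^ n / (n.factorial : ℝ) := by
  have h := Finset.sum_pow_eq_sum_piAntidiag (Finset.univ : Finset (Fin (e + 1))) (fun _ => (1:ℝ)) n
  simp only [one_pow, Finset.prod_const_one, mul_one, Finset.sum_const, Finset.card_univ,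
    Fintype.card_fin, nsmul_eq_mul] at h
  push_cast at h
  rw [h, Finset.sum_div]
  refine Finset.sum_congr rfl fun ℓ hℓ => ?_
  have h1 := (Finset.mem_piAntidiag.1 hℓ).1
  have h2 := Nat.multinomial_spec Finset.univ ℓ
  rw [h1] at h2
  have h3 : (∏ i, ((ℓ i).factorial : ℝ)) * (Nat.multinomial Finset.univ ℓ : ℝ) = n.factorial := by
    exact_mod_cast h2
  rw [← h3]
  have h4 : (∏ i, ((ℓ i).factorial : ℝ)) ≠ 0 := by positivity
  have h5 : (Nat.multinomial Finset.univ ℓ : ℝ) ≠ 0 := by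
    exact_mod_cast (Nat.multinomial_pos Finset.univ ℓ).ne'
  simp only [one_div, Finset.prod_inv_distrib]
  field_simp

/-- Term of the majorant series. -/
noncomputable def auxB (e K n : ℕ) (t : ℝ) : ℝ :=
  2 ^ (e ^ 2) / Real.sqrt Real.pi ^ e * (((e:ℝ) + 1) * t) ^ (2 * n + K) /
    ((n.factorial : ℝ) * Real.Gamma (n + ((K:ℝ) + ((e:ℝ) / 2 + 1))))

lemma auxB_nonneg (e K n : ℕ) {t : ℝ} (ht : 0 ≤ t) : 0 ≤ auxB e K n t := by
  unfold auxB
  have : 0 < Real.Gamma (n + ((K:ℝ) + ((e:ℝ) / 2 + 1))) := Real.Gamma_pos_of_pos (by positivity)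
  positivity

lemma aux_fiber (e : ℕ) (k : Fin (e + 1) → ℕ) (n : ℕ) {t : ℝ} (ht : 0 ≤ t) :
    ∑ ℓ ∈ Finset.piAntidiag (Finset.univ : Finset (Fin (e + 1))) n,
      ∏ i, (t ^ (2 * ℓ i + k i) / (((ℓ i).factorial : ℝ) * ((ℓ i + k i).factorial : ℝ))) ≤
      auxB e (∑ i, k i) n t := by
  have hG : 0 < Real.Gamma (n + (((∑ i, k i : ℕ):ℝ) + ((e:ℝ) / 2 + 1))) :=
    Real.Gamma_pos_of_pos (by positivity)
  set K := ∑ i, k i with hK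
  have hterm : ∀ ℓ ∈ Finset.piAntidiag (Finset.univ : Finset (Fin (e + 1))) n,
      ∏ i, (t ^ (2 * ℓ i + k i) / (((ℓ i).factorial : ℝ) * ((ℓ i + k i).factorial : ℝ))) ≤
      (t ^ (2 * n + K) * (2 ^ (e ^ 2) / Real.sqrt Real.pi ^ e * ((e:ℝ) + 1) ^ (n + K)) /
        Real.Gamma (n + ((K:ℝ) + ((e:ℝ) / 2 + 1)))) * ∏ i, (1 / ((ℓ i).factorial : ℝ)) := by
    intro ℓ hℓ
    have h1 : ∑ i, ℓ i = n := (Finset.mem_piAntidiag.1 hℓ).1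
    have hs : ∑ i, (ℓ i + k i) = n + K := by rw [Finset.sum_add_distrib, h1]
    have hkey := aux_key e (fun i => ℓ i + k i)
    rw [hs] at hkey
    rw [show ((n + K : ℕ) : ℝ) + ((e:ℝ) / 2 + 1) = n + ((K:ℝ) + ((e:ℝ) / 2 + 1)) by push_cast; ring]
      at hkey
    have hp : ∏ i, (t ^ (2 * ℓ i + k i) / (((ℓ i).factorial : ℝ) * ((ℓ i + k i).factorial : ℝ))) =
        t ^ (2 * n + K) * (∏ i, (1 / ((ℓ i).factorial : ℝ))) / ∏ i, ((ℓ i + k i).factorial : ℝ) := by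
      have hs2 : 2 * n + K = ∑ i, (2 * ℓ i + k i) := by
        rw [Finset.sum_add_distrib, ← Finset.mul_sum, h1]
      rw [hs2, ← Finset.prod_pow_eq_pow_sum, ← Finset.prod_mul_distrib, ← Finset.prod_div_distrib]
      refine Finset.prod_congr rfl fun i _ => ?_
      field_simp
    rw [hp]
    have hP : 0 < ∏ i, ((ℓ i + k i).factorial : ℝ) := by positivity
    rw [div_le_iff₀ hP]
    have hQ : 0 ≤ t ^ (2 * n + K) * ∏ i, (1 / ((ℓ i).factorial : ℝ)) := by positivity
    calc t ^ (2 * n + K) * ∏ i, (1 / ((ℓ i).factorial : ℝ))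
        = (t ^ (2 * n + K) * ∏ i, (1 / ((ℓ i).factorial : ℝ))) * 1 := by ring
      _ ≤ (t ^ (2 * n + K) * ∏ i, (1 / ((ℓ i).factorial : ℝ))) *
          ((2 ^ (e ^ 2) / Real.sqrt Real.pi ^ e * ((e:ℝ) + 1) ^ (n + K) *
            ∏ i, ((ℓ i + k i).factorial : ℝ)) / Real.Gamma (n + ((K:ℝ) + ((e:ℝ) / 2 + 1)))) := by
          apply mul_le_mul_of_nonneg_left _ hQ
          rw [le_div_iff₀ hG, one_mul]
          exact hkey
      _ = _ := by ring
  refine (Finset.sum_le_sum hterm).trans (le_of_eq ?_)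
  rw [← Finset.mul_sum, aux_multi]
  unfold auxB
  rw [mul_pow, show 2 * n + K = (n + K) + n by ring, pow_add ((e:ℝ) + 1) (n + K) n]
  field_simp

lemma auxB_summable (e K : ℕ) (hK : 1 ≤ K) {t : ℝ} (ht : 0 ≤ t) :
    Summable (fun n => auxB e K n t) := by
  have hK' : (1:ℝ) ≤ K := by exact_mod_cast hK
  have h0 := ((Real.summable_pow_div_factorial ((((e:ℝ) + 1) * t) ^ 2)).mul_left
    (2 ^ (e ^ 2) / Real.sqrt Real.pi ^ e * (((e:ℝ) + 1) * t) ^ K))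
  refine h0.of_nonneg_of_le (fun n => auxB_nonneg e K n ht) fun n => ?_
  have hG : 1 ≤ Real.Gamma (n + ((K:ℝ) + ((e:ℝ) / 2 + 1))) := by
    have h2 : (2:ℝ) ≤ n + ((K:ℝ) + ((e:ℝ) / 2 + 1)) := by
      have : (0:ℝ) ≤ n := by positivity
      have : (0:ℝ) ≤ e := by positivity
      linarith
    have h3 := Real.Gamma_strictMonoOn_Ici.monotoneOn (by simp) h2 h2
    rwa [Real.Gamma_two] at h3
  unfold auxB
  rw [pow_add, pow_mul, mul_div_assoc', mul_assoc _ (_ ^ K), mul_comm (_ ^ K)]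
  apply div_le_div_of_nonneg_left (by positivity) (by positivity)
  exact le_mul_of_one_le_right (by positivity) hG

lemma aux_bessel (k : ℤ) {t : ℝ} (ht : 0 ≤ t) :
    HasSum (fun ℓ : ℕ => t ^ (2 * ℓ + k.natAbs) /
      ((ℓ.factorial : ℝ) * ((ℓ + k.natAbs).factorial : ℝ))) (besselI k (2 * t)) := by
  have hs : Summable (fun ℓ : ℕ => t ^ (2 * ℓ + k.natAbs) /
      ((ℓ.factorial : ℝ) * ((ℓ + k.natAbs).factorial : ℝ))) := by
    refine ((Real.summable_pow_div_factorial (t ^ 2)).mul_left (t ^ k.natAbs)).of_nonneg_of_le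
      (fun n => by positivity) fun n => ?_
    rw [pow_add, pow_mul, mul_div_assoc', mul_comm (t ^ k.natAbs)]
    apply div_le_div_of_nonneg_left (by positivity) (by positivity)
    apply le_mul_of_one_le_right (by positivity)
    exact_mod_cast Nat.factorial_pos _
  convert hs.hasSum using 1
  unfold besselI
  refine tsum_congr fun ℓ => ?_
  rw [show 2 * t / 2 = t by ring, ← Real.Gamma_nat_eq_factorial (ℓ + k.natAbs)]
  push_cast
  rfl

lemma aux_pointwise (e : ℕ) (m : Fin (e + 1) → ℤ) (hK : 1 ≤ ∑ i, (m i).natAbs) {t : ℝ} (ht : 0 ≤ t) :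
    ∏ i, besselI (m i) (2 * t) ≤ ∑' n, auxB e (∑ i, (m i).natAbs) n t := by
  have hlim : Filter.Tendsto (fun L : ℕ => ∏ i, ∑ ℓ ∈ Finset.range L, t ^ (2 * ℓ + (m i).natAbs) /
      ((ℓ.factorial : ℝ) * ((ℓ + (m i).natAbs).factorial : ℝ))) Filter.atTop
      (nhds (∏ i, besselI (m i) (2 * t))) :=
    tendsto_finsetProd _ fun i _ => (aux_bessel (m i) ht).tendsto_sum_nat
  refine le_of_tendsto' hlim fun L => ?_
  rw [Finset.prod_univ_sum]
  set S := Fintype.piFinset (fun _ : Fin (e + 1) => Finset.range L)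
  have hmap : ∀ ℓ ∈ S, (∑ i, ℓ i) ∈ Finset.range ((e + 1) * L + 1) := by
    intro ℓ hℓ
    rw [Finset.mem_range, Nat.lt_succ_iff]
    calc ∑ i, ℓ i ≤ ∑ i : Fin (e + 1), L := by
          refine Finset.sum_le_sum fun i _ => ?_
          exact (Finset.mem_range.1 (Fintype.mem_piFinset.1 hℓ i)).le
      _ = _ := by simp
  rw [← Finset.sum_fiberwise_of_maps_to hmap]
  refine le_trans (Finset.sum_le_sum fun n _ => ?_)
    ((auxB_summable e _ hK ht).sum_le_tsum (Finset.range ((e + 1) * L + 1))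
      (fun n _ => auxB_nonneg e _ n ht))
  refine le_trans ?_ (aux_fiber e (fun i => (m i).natAbs) n ht)
  apply Finset.sum_le_sum_of_subset_of_nonneg
  · intro ℓ hℓ
    rw [Finset.mem_piAntidiag]
    exact ⟨(Finset.mem_filter.1 hℓ).2, fun i _ => Finset.mem_univ i⟩
  · intro ℓ _ _
    positivity

lemma aux_bessel_nonneg (k : ℤ) {t : ℝ} (ht : 0 ≤ t) : 0 ≤ besselI k (2 * t) :=
  (aux_bessel k ht).nonneg fun n => by positivity

lemma aux_term (e K n : ℕ) (hK : 1 ≤ K) {s : ℝ} (hs1 : s < 1) :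
    ∫⁻ t in Set.Ioi (0:ℝ), ENNReal.ofReal
      (Real.exp (-(2 * ((e + 1 : ℕ):ℝ) * t)) * auxB e K n t / t ^ (1 + s)) =
    ENNReal.ofReal (2 ^ (e ^ 2) / Real.sqrt Real.pi ^ e * ((e:ℝ) + 1) ^ s *
      (Real.Gamma (2 * n + ((K:ℝ) - s)) * (2:ℝ) ^ (-(2 * n + ((K:ℝ) - s))) /
      ((n.factorial : ℝ) * Real.Gamma (n + ((K:ℝ) + (((e:ℝ) + 1) + 1) / 2))))) := by
  have hK' : (1:ℝ) ≤ K := by exact_mod_cast hK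
  have ha : 0 < 2 * (n:ℝ) + ((K:ℝ) - s) := by
    have : (0:ℝ) ≤ n := by positivity
    linarith
  have hd : (0:ℝ) < (e:ℝ) + 1 := by positivity
  set c : ℝ := 2 ^ (e ^ 2) / Real.sqrt Real.pi ^ e * ((e:ℝ) + 1) ^ (2 * n + K) /
    ((n.factorial : ℝ) * Real.Gamma (n + ((K:ℝ) + ((e:ℝ) / 2 + 1)))) with hc
  have hfun : ∀ t ∈ Set.Ioi (0:ℝ), ENNReal.ofReal
      (Real.exp (-(2 * ((e + 1 : ℕ):ℝ) * t)) * auxB e K n t / t ^ (1 + s)) =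
      ENNReal.ofReal (c * (t ^ ((2 * (n:ℝ) + ((K:ℝ) - s)) - 1) * Real.exp (-((2 * ((e:ℝ) + 1)) * t)))) := by
    intro t ht
    have ht : 0 < t := ht
    congr 1
    have h1 : t ^ ((2 * (n:ℝ) + ((K:ℝ) - s)) - 1) = t ^ (2 * n + K) / t ^ (1 + s) := by
      rw [← Real.rpow_natCast, ← Real.rpow_sub ht]; congr 1; push_cast; ring
    rw [h1, hc]
    unfold auxB
    rw [mul_pow]
    push_cast
    ring
  rw [setLIntegral_congr_fun measurableSet_Ioi hfun]
  have hcn : 0 ≤ c := by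
    have : 0 < Real.Gamma (n + ((K:ℝ) + ((e:ℝ) / 2 + 1))) := Real.Gamma_pos_of_pos (by positivity)
    positivity
  rw [← ofReal_integral_eq_lintegral_ofReal
    ((aux_gamma_int ha (by positivity : 0 < 2 * ((e:ℝ) + 1))).const_mul c)]
  · congr 1
    rw [integral_const_mul, Real.integral_rpow_mul_exp_neg_mul_Ioi ha (by positivity), hc,
      show (K:ℝ) + (((e:ℝ) + 1) + 1) / 2 = (K:ℝ) + ((e:ℝ) / 2 + 1) by ring]
    have h2 : (1 / (2 * ((e:ℝ) + 1))) ^ (2 * (n:ℝ) + ((K:ℝ) - s)) =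
        (2:ℝ) ^ (-(2 * (n:ℝ) + ((K:ℝ) - s))) * (((e:ℝ) + 1) ^ s / ((e:ℝ) + 1) ^ (2 * n + K)) := by
      rw [one_div, Real.inv_rpow (by positivity), Real.mul_rpow (by norm_num) hd.le, mul_inv,
        Real.rpow_neg (by norm_num)]
      congr 1
      rw [← Real.rpow_neg hd.le, ← Real.rpow_natCast ((e:ℝ) + 1), ← Real.rpow_sub hd]
      congr 1; push_cast; ring
    rw [h2]
    field_simp
  · filter_upwards [ae_restrict_mem measurableSet_Ioi] with t ht
    have ht : 0 < t := ht
    simp only [Pi.zero_apply]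
    positivity

lemma aux_main (e : ℕ) (m : Fin (e + 1) → ℤ) (hK : 1 ≤ ∑ i, (m i).natAbs) {s : ℝ} (hs0 : 0 < s)
    (hs1 : s < 1) (R : ℝ)
    (hR : R = 2 ^ (e ^ 2) / Real.sqrt Real.pi ^ e * ((e:ℝ) + 1) ^ s *
      ((2:ℝ) ^ (2 * s + ((e:ℝ) + 1) - 1) * Real.Gamma (((e:ℝ) + 1) / 2 + s) *
        Real.Gamma (((∑ i, (m i).natAbs : ℕ) : ℝ) - s) /
        (Real.sqrt Real.pi * Real.Gamma (((∑ i, (m i).natAbs : ℕ) : ℝ) + ((e:ℝ) + 1) + s)))) :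
    ∫ t in Set.Ioi (0 : ℝ), heatG (e + 1) m t / t ^ (1 + s) ≤ R := by
  set K := ∑ i, (m i).natAbs with hKdef
  have hK' : (1:ℝ) ≤ K := by exact_mod_cast hK
  have hR0 : 0 ≤ R := by
    have h1 : 0 < Real.Gamma (((e:ℝ) + 1) / 2 + s) := Real.Gamma_pos_of_pos (by positivity)
    have h2 : 0 < Real.Gamma ((K:ℝ) - s) := Real.Gamma_pos_of_pos (by linarith)
    have h3 : 0 < Real.Gamma ((K:ℝ) + ((e:ℝ) + 1) + s) := Real.Gamma_pos_of_pos (by positivity)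
    rw [hR]; positivity
  refine (le_abs_self _).trans ?_
  rw [← Real.norm_eq_abs]
  refine (norm_integral_le_lintegral_norm _).trans ?_
  apply ENNReal.toReal_le_of_le_ofReal hR0
  have hmeas : ∀ n, Measurable (fun t : ℝ => ENNReal.ofReal
          (Real.exp (-(2 * ((e + 1 : ℕ):ℝ) * t)) * auxB e K n t / t ^ (1 + s))) := by
    intro n; unfold auxB; fun_prop
  calc _ ≤ ∫⁻ t in Set.Ioi (0:ℝ), ∑' n, ENNReal.ofReal
          (Real.exp (-(2 * ((e + 1 : ℕ):ℝ) * t)) * auxB e K n t / t ^ (1 + s)) := by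
        refine setLIntegral_mono' measurableSet_Ioi fun t ht => ?_
        have ht : 0 < t := ht
        have hsum := ((auxB_summable e K hK ht.le).mul_left
          (Real.exp (-(2 * ((e + 1 : ℕ):ℝ) * t)))).div_const (t ^ (1 + s))
        rw [← ENNReal.ofReal_tsum_of_nonneg _ hsum]
        · apply ENNReal.ofReal_le_ofReal
          rw [tsum_div_const, tsum_mul_left]
          have hp : 0 ≤ ∏ i, besselI (m i) (2 * t) :=
            Finset.prod_nonneg fun i _ => aux_bessel_nonneg _ ht.le
          have hh : 0 ≤ heatG (e + 1) m t / t ^ (1 + s) := by unfold heatG; positivity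
          rw [Real.norm_of_nonneg hh]
          unfold heatG
          have := aux_pointwise e m hK ht.le
          gcongr
        · intro n
          have := auxB_nonneg e K n ht.le
          positivity
    _ = ∑' n, ∫⁻ t in Set.Ioi (0:ℝ), ENNReal.ofReal
          (Real.exp (-(2 * ((e + 1 : ℕ):ℝ) * t)) * auxB e K n t / t ^ (1 + s)) :=
        lintegral_tsum fun n => (hmeas n).aemeasurable
    _ = ∑' n : ℕ, ENNReal.ofReal (2 ^ (e ^ 2) / Real.sqrt Real.pi ^ e * ((e:ℝ) + 1) ^ s *
          (Real.Gamma (2 * n + ((K:ℝ) - s)) * (2:ℝ) ^ (-(2 * n + ((K:ℝ) - s))) /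
          ((n.factorial : ℝ) * Real.Gamma (n + ((K:ℝ) + (((e:ℝ) + 1) + 1) / 2))))) :=
        tsum_congr fun n => aux_term e K n hK hs1
    _ ≤ _ := by
        rw [ENNReal.tsum_eq_iSup_nat]
        refine iSup_le fun N => ?_
        rw [← ENNReal.ofReal_sum_of_nonneg]
        · apply ENNReal.ofReal_le_ofReal
          rw [← Finset.mul_sum, hR]
          apply mul_le_mul_of_nonneg_left _ (by positivity)
          exact aux_sum rfl (by linarith) hs0 (by positivity) N
        · intro n _
          have h1 : 0 < Real.Gamma (2 * n + ((K:ℝ) - s)) := Real.Gamma_pos_of_pos (by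
            have : (0:ℝ) ≤ n := by positivity
            linarith)
          have h2 : 0 < Real.Gamma (n + ((K:ℝ) + (((e:ℝ) + 1) + 1) / 2)) :=
            Real.Gamma_pos_of_pos (by positivity)
          positivity

lemma aux_const (e : ℕ) {s : ℝ} (hs0 : 0 < s) :
    2 ^ (e ^ 2) / Real.sqrt Real.pi ^ e * ((e:ℝ) + 1) ^ s * (2:ℝ) ^ (2 * s + ((e:ℝ) + 1) - 1) /
      Real.sqrt Real.pi ≤
    (2:ℝ) ^ (((e:ℝ) + 1) * (((e:ℝ) + 1) + 2 * s - 1)) * 4 ^ s / Real.pi ^ (((e:ℝ) + 1) / 2) := by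
  have hpi := Real.pi_pos
  have h1 : Real.pi ^ (((e:ℝ) + 1) / 2) = Real.sqrt Real.pi ^ e * Real.sqrt Real.pi := by
    rw [← pow_succ, Real.sqrt_eq_rpow, ← Real.rpow_natCast, ← Real.rpow_mul hpi.le]
    congr 1; push_cast; ring
  have h4 : (4:ℝ) ^ s = 2 ^ (2 * s) := by
    rw [Real.rpow_mul (by norm_num)]; norm_num
  have h2 : ((e:ℝ) + 1) ^ s ≤ (2:ℝ) ^ (2 * s * ((e:ℝ) + 1)) := by
    rw [show 2 * s * ((e:ℝ) + 1) = (2 * ((e:ℝ) + 1)) * s by ring, Real.rpow_mul (by norm_num)]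
    apply Real.rpow_le_rpow (by positivity) _ hs0.le
    have : e + 1 ≤ 2 ^ (2 * (e + 1)) := by
      calc e + 1 ≤ 2 ^ (e + 1) := Nat.lt_two_pow_self.le
        _ ≤ _ := Nat.pow_le_pow_right (by norm_num) (by omega)
    have h3 : (2:ℝ) ^ (2 * ((e:ℝ) + 1)) = 2 ^ (2 * (e + 1)) := by
      rw [← Real.rpow_natCast]; push_cast; rfl
    rw [h3]
    exact_mod_cast this
  have h5 : (2:ℝ) ^ (e ^ 2) = (2:ℝ) ^ ((e:ℝ) ^ 2) := by
    rw [← Real.rpow_natCast]; push_cast; rfl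
  rw [h1, show 2 ^ (e ^ 2) / Real.sqrt Real.pi ^ e * ((e:ℝ) + 1) ^ s * (2:ℝ) ^ (2 * s + ((e:ℝ) + 1) - 1) /
      Real.sqrt Real.pi = 2 ^ (e ^ 2) * ((e:ℝ) + 1) ^ s * (2:ℝ) ^ (2 * s + ((e:ℝ) + 1) - 1) /
      (Real.sqrt Real.pi ^ e * Real.sqrt Real.pi) by field_simp]
  refine div_le_div_of_nonneg_right ?_ (by positivity)
  rw [h4, h5]
  calc _ ≤ (2:ℝ) ^ ((e:ℝ) ^ 2) * (2:ℝ) ^ (2 * s * ((e:ℝ) + 1)) * (2:ℝ) ^ (2 * s + ((e:ℝ) + 1) - 1) := by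
        gcongr
    _ = _ := by
        rw [← Real.rpow_add two_pos, ← Real.rpow_add two_pos, ← Real.rpow_add two_pos]
        congr 1; ring

/-- Upper bound for the `d`-dimensional discrete kernel `K_s^h(m)`. -/
theorem kernel_upper_bound (d : ℕ) (hd : 1 ≤ d) (h s : ℝ) (hh : 0 < h)
    (hs : s ∈ Set.Ioo (0 : ℝ) 1) (m : Fin d → ℤ) (hm : m ≠ 0) :
    Ksh d h s m ≤
      h ^ (-(2 * s)) *
        ((2 : ℝ) ^ ((d : ℝ) * ((d : ℝ) + 2 * s - 1)) * 4 ^ s *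
          Real.Gamma ((d : ℝ) / 2 + s) *
          Real.Gamma ((∑ i, ((m i).natAbs : ℝ)) - s)) /
        (Real.pi ^ ((d : ℝ) / 2) * |Real.Gamma (-s)| *
          Real.Gamma ((∑ i, ((m i).natAbs : ℝ)) + (d : ℝ) + s)) := by
  obtain ⟨hs0, hs1⟩ := hs
  obtain ⟨e, rfl⟩ : ∃ e, d = e + 1 := ⟨d - 1, by omega⟩
  have hK : 1 ≤ ∑ i, (m i).natAbs := by
    by_contra hcon
    have h0 : ∑ i, (m i).natAbs = 0 := by omega
    apply hm
    funext i
    have := (Finset.sum_eq_zero_iff.1 h0) i (Finset.mem_univ i)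
    simpa using this
  have hmain := aux_main e m hK hs0 hs1 _ rfl
  have hcst := aux_const e hs0
  unfold Ksh
  rw [if_neg hm]
  have hcast : (∑ i, ((m i).natAbs : ℝ)) = ((∑ i, (m i).natAbs : ℕ) : ℝ) := by push_cast; rfl
  have hcast2 : ((e + 1 : ℕ) : ℝ) = (e:ℝ) + 1 := by push_cast; rfl
  rw [hcast, hcast2]
  set K := ∑ i, (m i).natAbs with hKdef
  have hK' : (1:ℝ) ≤ K := by exact_mod_cast hK
  have g1 : 0 < Real.Gamma (((e:ℝ) + 1) / 2 + s) := Real.Gamma_pos_of_pos (by positivity)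
  have g2 : 0 < Real.Gamma ((K:ℝ) - s) := Real.Gamma_pos_of_pos (by linarith)
  have g3 : 0 < Real.Gamma ((K:ℝ) + ((e:ℝ) + 1) + s) := Real.Gamma_pos_of_pos (by positivity)
  have hpre : 0 ≤ h ^ (-(2 * s)) * |Real.Gamma (-s)|⁻¹ := by positivity
  set A := Real.Gamma (((e:ℝ) + 1) / 2 + s) * Real.Gamma ((K:ℝ) - s) /
    Real.Gamma ((K:ℝ) + ((e:ℝ) + 1) + s) with hA
  have hA0 : 0 ≤ A := by positivity
  calc _ ≤ h ^ (-(2 * s)) * |Real.Gamma (-s)|⁻¹ * _ := mul_le_mul_of_nonneg_left hmain hpre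
    _ = h ^ (-(2 * s)) * |Real.Gamma (-s)|⁻¹ * ((2 ^ (e ^ 2) / Real.sqrt Real.pi ^ e * ((e:ℝ) + 1) ^ s *
          (2:ℝ) ^ (2 * s + ((e:ℝ) + 1) - 1) / Real.sqrt Real.pi) * A) := by
        rw [hA]; field_simp
    _ ≤ h ^ (-(2 * s)) * |Real.Gamma (-s)|⁻¹ * (((2:ℝ) ^ (((e:ℝ) + 1) * (((e:ℝ) + 1) + 2 * s - 1)) * 4 ^ s /
          Real.pi ^ (((e:ℝ) + 1) / 2)) * A) :=
        mul_le_mul_of_nonneg_left (mul_le_mul_of_nonneg_right hcst hA0) hpre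
    _ = _ := by
        rw [hA]; ring
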